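/- Correctness and termination of local successive elimination (Lemma 2 of the paper, stated deterministically on the concentration event): let A be a finite set with |A| ≥ 2, K ≥ 1 a natural number, δ ∈ (0,1), c ≥ 2 a real number, and define α(t) = sqrt( log(4·K·|A|·t²/δ) / t ) for integers t ≥ 1. Let r : A → [0,1] have a unique maximizer a₁, and suppose r̂ : A × {1,2,…} → ℝ satisfies |r̂_ℓ(t) − r_ℓ| ≤ α(t) for every ℓ ∈ A and integer t ≥ 1. Define the active sets recursively by S(1) = A and S(t+1) = { ℓ ∈ S(t) : max_{j ∈ S(t)} r̂_j(t) − r̂_ℓ(t) < c·α(t) }. Then: (i) a₁ ∈ S(t) for every t ≥ 1; (ii) for every ℓ ∈ A \ {a₁} and every t ≥ 1 with α(t) ≤ (r_{a₁} − r_ℓ)/(c+2), one has ℓ ∉ S(t+1) (for c = 2 this is the paper's condition α(t) ≤ (r_{a₁} − r_ℓ)/4); (iii) there exists an integer t̄ ≥ 1 such that S(t) = {a₁} for all t > t̄. -/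

import Mathlib

/-!
At epoch `t`, replacing true means by empirical ones moves a difference of two means by at most
`2 α t`. So no arm beats the best one empirically by `c α t ≥ 2 α t`, while an arm whose gap is at
least `(c + 2) α t` trails the best one by at least `c α t`. The radius tends to `0`, hence it
eventually falls below every gap divided by `c + 2`, provided the gaps are bounded away from `0`.
-/

open Filter Topology

theorem abs_sub_sub_sub_le_two_mul {x y u v ε : ℝ} (hx : |x - u| ≤ ε) (hy : |y - v| ≤ ε) :
    |(x - y) - (u - v)| ≤ 2 * ε :=
  calc |(x - y) - (u - v)| = |(x - u) - (y - v)| := by rw [sub_sub_sub_comm]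
    _ ≤ |x - u| + |y - v| := abs_sub _ _
    _ ≤ 2 * ε := by linarith

theorem exists_lt_forall_mem_finset_le {ι β : Type*} [LinearOrder β] [NoMinOrder β]
    (s : Finset ι) (f : ι → β) {b : β} (h : ∀ i ∈ s, f i < b) :
    ∃ m < b, ∀ i ∈ s, f i ≤ m := by
  rcases s.eq_empty_or_nonempty with rfl | hs
  · simpa using exists_lt b
  · obtain ⟨i, hi, hmax⟩ := s.exists_max_image f hs
    exact ⟨f i, h i hi, hmax⟩

theorem tendsto_log_const_mul_pow_div_atTop {C : ℝ} (hC : C ≠ 0) (k : ℕ) :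
    Tendsto (fun x : ℝ ↦ Real.log (C * x ^ k) / x) atTop (𝓝 0) := by
  have hlog : Tendsto (fun x : ℝ ↦ Real.log x / x) atTop (𝓝 0) :=
    Real.isLittleO_log_id_atTop.tendsto_div_nhds_zero
  have hsum : Tendsto (fun x : ℝ ↦ Real.log C / x + k * (Real.log x / x)) atTop (𝓝 0) := by
    simpa using (tendsto_id.const_div_atTop (Real.log C)).add (hlog.const_mul (k : ℝ))
  refine hsum.congr' ?_
  filter_upwards [eventually_ne_atTop 0] with x hx
  rw [Real.log_mul hC (pow_ne_zero k hx), Real.log_pow]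
  ring

/-- The confidence radius `α(t)` at epoch `t` for `n` arms; at `t = 0` it has the junk value `0`. -/
noncomputable def confidenceRadius (K n : ℕ) (δ : ℝ) (t : ℕ) : ℝ :=
  √(Real.log (4 * (K : ℝ) * (n : ℝ) * (t : ℝ) ^ 2 / δ) / (t : ℝ))

section ConfidenceRadius

variable {K n : ℕ} {δ : ℝ}

theorem confidenceRadius_pos (hK : K ≠ 0) (hn : n ≠ 0) (hδ0 : 0 < δ) (hδ1 : δ < 1) {t : ℕ}
    (ht : t ≠ 0) : 0 < confidenceRadius K n δ t := by
  have hprod : (1 : ℝ) ≤ 4 * K * n * t ^ 2 := by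
    exact_mod_cast Nat.one_le_iff_ne_zero.2 (by positivity)
  have hlog : 0 < Real.log (4 * K * n * t ^ 2 / δ) :=
    Real.log_pos ((one_lt_div hδ0).2 (hδ1.trans_le hprod))
  exact Real.sqrt_pos.2 (div_pos hlog (by positivity))

theorem tendsto_confidenceRadius (hK : K ≠ 0) (hn : n ≠ 0) (hδ : δ ≠ 0) :
    Tendsto (confidenceRadius K n δ) atTop (𝓝 0) := by
  have hC : 4 * (K : ℝ) * n / δ ≠ 0 := by positivity
  have hlim := ((tendsto_log_const_mul_pow_div_atTop hC 2).comp tendsto_natCast_atTop_atTop).sqrt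
  rw [Real.sqrt_zero] at hlim
  refine hlim.congr fun t ↦ ?_
  simp only [Function.comp_apply, confidenceRadius, mul_div_right_comm]

end ConfidenceRadius

/-- `S` is the sequence of active sets of successive elimination started from the arm-set `A`, with
empirical means `rhat` and elimination threshold `w`. Epochs are numbered from `1`, so `S 0` is
unconstrained. The condition that the largest active empirical mean exceeds that of `ℓ` by less than
`w t` is expressed by comparing `ℓ` with each active arm. -/
structure IsSuccessiveElimination {κ : Type*} (A : Set κ) (rhat : κ → ℕ → ℝ) (w : ℕ → ℝ)
    (S : ℕ → Set κ) : Prop where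
  one_eq : S 1 = A
  mem_succ_iff : ∀ t, 1 ≤ t → ∀ ℓ, ℓ ∈ S (t + 1) ↔ ℓ ∈ S t ∧ ∀ j ∈ S t, rhat j t - rhat ℓ t < w t

namespace IsSuccessiveElimination

variable {κ : Type*} {A : Set κ} {rhat : κ → ℕ → ℝ} {w α : ℕ → ℝ} {S : ℕ → Set κ} {r : κ → ℝ}
  {a ℓ : κ} {t : ℕ}

theorem subset (hS : IsSuccessiveElimination A rhat w S) (ht : 1 ≤ t) : S t ⊆ A := by
  induction t, ht using Nat.le_induction with
  | base => exact hS.one_eq.subset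
  | succ t ht ih => exact fun ℓ hℓ ↦ ih ((hS.mem_succ_iff t ht ℓ).1 hℓ).1

theorem best_mem (hS : IsSuccessiveElimination A rhat w S)
    (hconc : ∀ ℓ ∈ A, ∀ t, 1 ≤ t → |rhat ℓ t - r ℓ| ≤ α t)
    (ha : a ∈ A) (hbest : ∀ ℓ ∈ A, ℓ ≠ a → r ℓ < r a)
    (hw : ∀ t, 1 ≤ t → 0 < w t) (hαw : ∀ t, 1 ≤ t → 2 * α t ≤ w t) (ht : 1 ≤ t) : a ∈ S t := by
  induction t, ht using Nat.le_induction with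
  | base => exact hS.one_eq ▸ ha
  | succ t ht ih =>
    refine (hS.mem_succ_iff t ht a).2 ⟨ih, fun j hj ↦ ?_⟩
    rcases eq_or_ne j a with rfl | hja
    · simpa using hw t ht
    · have hjA : j ∈ A := hS.subset ht hj
      have hdiff := abs_sub_sub_sub_le_two_mul (hconc j hjA t ht) (hconc a ha t ht)
      linarith [le_abs_self ((rhat j t - rhat a t) - (r j - r a)), hbest j hjA hja, hαw t ht]

theorem notMem_succ (hS : IsSuccessiveElimination A rhat w S) (ht : 1 ≤ t) (ha : a ∈ S t)
    (hconc_a : |rhat a t - r a| ≤ α t) (hconc_ℓ : |rhat ℓ t - r ℓ| ≤ α t)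
    (hgap : w t + 2 * α t ≤ r a - r ℓ) : ℓ ∉ S (t + 1) := by
  intro hℓ
  have hactive : rhat a t - rhat ℓ t < w t := ((hS.mem_succ_iff t ht ℓ).1 hℓ).2 a ha
  have hdiff := abs_sub_sub_sub_le_two_mul hconc_a hconc_ℓ
  linarith [neg_abs_le ((rhat a t - rhat ℓ t) - (r a - r ℓ))]

theorem eventually_eq_singleton (hS : IsSuccessiveElimination A rhat w S)
    (hconc : ∀ ℓ ∈ A, ∀ t, 1 ≤ t → |rhat ℓ t - r ℓ| ≤ α t)
    (ha : ∀ t, 1 ≤ t → a ∈ S t) {m : ℝ} (hm : m < r a) (hle : ∀ ℓ ∈ A, ℓ ≠ a → r ℓ ≤ m)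
    (hlim : Tendsto (fun t ↦ w t + 2 * α t) atTop (𝓝 0)) : ∀ᶠ t in atTop, S t = {a} := by
  rw [← map_add_atTop_eq_nat 1, eventually_map]
  filter_upwards [eventually_ge_atTop 1, hlim.eventually_le_const (sub_pos.2 hm)] with t ht hsmall
  refine Set.eq_singleton_iff_unique_mem.2 ⟨ha _ (by lia), fun ℓ hℓ ↦ ?_⟩
  by_contra hne
  have haA : a ∈ A := hS.subset ht (ha t ht)
  have hℓA : ℓ ∈ A := hS.subset (by lia) hℓ
  exact hS.notMem_succ ht (ha t ht) (hconc a haA t ht) (hconc ℓ hℓA t ht)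
    (by linarith [hle ℓ hℓA hne]) hℓ

end IsSuccessiveElimination

theorem local_successive_elimination_general {κ : Type*} {A : Set κ} {c : ℝ} (hc : 2 ≤ c)
    {α : ℕ → ℝ} (hα_pos : ∀ t, 1 ≤ t → 0 < α t) (hα_lim : Tendsto α atTop (𝓝 0))
    {r : κ → ℝ} {a₁ : κ} (ha₁ : a₁ ∈ A)
    {m : ℝ} (hm : m < r a₁) (hle : ∀ ℓ ∈ A, ℓ ≠ a₁ → r ℓ ≤ m)
    {rhat : κ → ℕ → ℝ} (hconc : ∀ ℓ ∈ A, ∀ t, 1 ≤ t → |rhat ℓ t - r ℓ| ≤ α t)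
    {S : ℕ → Set κ} (hS : IsSuccessiveElimination A rhat (fun t ↦ c * α t) S) :
    (∀ t, 1 ≤ t → a₁ ∈ S t) ∧
    (∀ ℓ ∈ A, ∀ t, 1 ≤ t → α t ≤ (r a₁ - r ℓ) / (c + 2) → ℓ ∉ S (t + 1)) ∧
    ∃ tbar, 1 ≤ tbar ∧ ∀ t, tbar < t → S t = {a₁} := by
  have hbest : ∀ t, 1 ≤ t → a₁ ∈ S t := fun t ht ↦
    hS.best_mem hconc ha₁ (fun ℓ hℓ hne ↦ (hle ℓ hℓ hne).trans_lt hm)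
      (fun t ht ↦ mul_pos (by linarith) (hα_pos t ht))
      (fun t ht ↦ mul_le_mul_of_nonneg_right hc (hα_pos t ht).le) ht
  refine ⟨hbest, fun ℓ hℓ t ht hsmall ↦ ?_, ?_⟩
  · rw [le_div_iff₀ (by linarith)] at hsmall
    exact hS.notMem_succ ht (hbest t ht) (hconc a₁ ha₁ t ht) (hconc ℓ hℓ t ht) (by linarith)
  · have hlim : Tendsto (fun t ↦ c * α t + 2 * α t) atTop (𝓝 0) := by
      simpa using (hα_lim.const_mul c).add (hα_lim.const_mul 2)
    obtain ⟨N, hN⟩ := eventually_atTop.1 (hS.eventually_eq_singleton hconc hbest hm hle hlim)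
    exact ⟨max N 1, le_max_right _ _, fun t ht ↦ hN t (by lia)⟩

/-- Correctness and termination of local successive elimination (Lemma 2 of the paper,
stated deterministically on the concentration event). With confidence radius
`α(t) = sqrt(log(4 K |A| t² / δ) / t)`, unique best arm `a₁`, empirical means `rhat` within
`α(t)` of the true means, and active sets `S(1) = A`,
`S(t+1) = {ℓ ∈ S(t) : max_{j ∈ S(t)} rhat j t - rhat ℓ t < c α(t)}`:
(i) `a₁` is never eliminated; (ii) any suboptimal arm `ℓ` is eliminated once
`α(t) ≤ (r a₁ - r ℓ)/(c+2)`; (iii) eventually `S(t) = {a₁}`. -/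
theorem local_successive_elimination {κ : Type*} [DecidableEq κ]
    (A : Finset κ) (hA : 2 ≤ A.card) (K : ℕ) (hK : 1 ≤ K)
    (δ : ℝ) (hδ0 : 0 < δ) (hδ1 : δ < 1) (c : ℝ) (hc : 2 ≤ c)
    (α : ℕ → ℝ)
    (hα : ∀ t : ℕ, 1 ≤ t →
      α t = Real.sqrt (Real.log (4 * (K : ℝ) * (A.card : ℝ) * (t : ℝ) ^ 2 / δ) / (t : ℝ)))
    (r : κ → ℝ) (hr : ∀ ℓ ∈ A, r ℓ ∈ Set.Icc (0 : ℝ) 1)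
    (a₁ : κ) (ha₁ : a₁ ∈ A) (hmax : ∀ ℓ ∈ A, ℓ ≠ a₁ → r ℓ < r a₁)
    (rhat : κ → ℕ → ℝ)
    (hconc : ∀ ℓ ∈ A, ∀ t : ℕ, 1 ≤ t → |rhat ℓ t - r ℓ| ≤ α t)
    (S : ℕ → Finset κ) (hS1 : S 1 = A)
    (hSrec : ∀ t : ℕ, 1 ≤ t → ∀ ℓ : κ,
      ℓ ∈ S (t + 1) ↔ ℓ ∈ S t ∧ ∀ j ∈ S t, rhat j t - rhat ℓ t < c * α t) :
    (∀ t : ℕ, 1 ≤ t → a₁ ∈ S t) ∧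
    (∀ ℓ ∈ A, ℓ ≠ a₁ → ∀ t : ℕ, 1 ≤ t →
      α t ≤ (r a₁ - r ℓ) / (c + 2) → ℓ ∉ S (t + 1)) ∧
    (∃ tbar : ℕ, 1 ≤ tbar ∧ ∀ t : ℕ, tbar < t → S t = {a₁}) := by
  have hK0 : K ≠ 0 := by lia
  have hA0 : A.card ≠ 0 := by lia
  obtain ⟨m, hm, hle⟩ := exists_lt_forall_mem_finset_le (A.erase a₁) r (b := r a₁) (by grind)
  have hα_pos : ∀ t, 1 ≤ t → 0 < α t := fun t ht ↦
    hα t ht ▸ confidenceRadius_pos hK0 hA0 hδ0 hδ1 (by lia)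
  have hα_lim : Tendsto α atTop (𝓝 0) :=
    (tendsto_confidenceRadius hK0 hA0 hδ0.ne').congr'
      ((eventually_ge_atTop 1).mono fun t ht ↦ (hα t ht).symm)
  have hS : IsSuccessiveElimination A rhat (fun t ↦ c * α t) (fun t ↦ S t) :=
    ⟨congrArg _ hS1, hSrec⟩
  obtain ⟨hmem, helim, hend⟩ := local_successive_elimination_general hc hα_pos hα_lim ha₁ hm
    (fun ℓ hℓ hne ↦ hle ℓ (Finset.mem_erase.2 ⟨hne, hℓ⟩)) hconc hS
  exact ⟨hmem, fun ℓ hℓ _ ↦ helim ℓ hℓ, mod_cast hend⟩
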